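/- Let c₀ > 0 and let φ : ℝ² × (−∞,0] → ℝ be twice continuously differentiable with ∂_zφ ≥ c₀ and |∇φ| + |∇²φ| ≤ 1/c₀ pointwise. Then there exists a constant C depending only on c₀ such that every continuously differentiable vector field v : ℝ² × (−∞,0] → ℝ³ for which v and ∇v are square-integrable on S satisfies ∫_S |∇v|² dy dz ≤ C ( ∫_S |S^φ v|² ∂_zφ dy dz + ∫_S |v|² dy dz ). -/

import Mathlib

open MeasureTheory

/-- The `i`-th partial derivative of a function on `ℝ³` (coordinates `x = (y₁, y₂, z)`,
with `z` the coordinate of index `2`). -/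
noncomputable def pd (i : Fin 3) (f : (Fin 3 → ℝ) → ℝ) (x : Fin 3 → ℝ) : ℝ :=
  fderiv ℝ f x (Pi.single i 1)

/-- The operators `∂ᵢ^φ` associated to `φ`. -/
noncomputable def pdphi (φ : (Fin 3 → ℝ) → ℝ) (i : Fin 3) (f : (Fin 3 → ℝ) → ℝ)
    (x : Fin 3 → ℝ) : ℝ :=
  if i = 2 then pd 2 f x / pd 2 φ x
  else pd i f x - pd i φ x / pd 2 φ x * pd 2 f x

/-- The lower half-space `S = ℝ² × (−∞, 0)` of `ℝ³`. -/
def lowerHalf : Set (Fin 3 → ℝ) := {x | x 2 < 0}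

theorem pd_eq {f : (Fin 3 → ℝ) → ℝ} {f' : (Fin 3 → ℝ) →L[ℝ] ℝ} {x : Fin 3 → ℝ}
    (h : HasFDerivAt f f' x) (i : Fin 3) : pd i f x = f' (Pi.single i 1) := by
  simp [pd, h.fderiv]

theorem pd_continuous {f : (Fin 3 → ℝ) → ℝ} (h : ContDiff ℝ 1 f) (i : Fin 3) :
    Continuous (pd i f) := by
  have := h.continuous_fderiv (by norm_num)
  unfold pd
  fun_prop

theorem pd_compact {f : (Fin 3 → ℝ) → ℝ} (h : HasCompactSupport f) (i : Fin 3) :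
    HasCompactSupport (pd i f) := h.fderiv_apply ℝ _

open scoped Convolution in
theorem conv_right {f g : (Fin 3 → ℝ) → ℝ} (hf : Continuous f) (hg : ContDiff ℝ 1 g)
    (hcg : HasCompactSupport g) (i : Fin 3) (x : Fin 3 → ℝ) :
    pd i (f ⋆[ContinuousLinearMap.mul ℝ ℝ, volume] g) x
      = (f ⋆[ContinuousLinearMap.mul ℝ ℝ, volume] pd i g) x := by
  rw [pd_eq (hcg.hasFDerivAt_convolution_right (ContinuousLinearMap.mul ℝ ℝ)
    hf.locallyIntegrable hg x)]
  rw [convolution_precompR_apply _ hf.locallyIntegrable (hcg.fderiv ℝ)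
    (hg.continuous_fderiv (by norm_num))]
  rfl

open scoped Convolution in
theorem conv_left {f g : (Fin 3 → ℝ) → ℝ} (hf : ContDiff ℝ 1 f) (hg : Continuous g)
    (hcf : HasCompactSupport f) (i : Fin 3) (x : Fin 3 → ℝ) :
    pd i (f ⋆[ContinuousLinearMap.mul ℝ ℝ, volume] g) x
      = (pd i f ⋆[ContinuousLinearMap.mul ℝ ℝ, volume] g) x := by
  have e : ∀ (a b : (Fin 3 → ℝ) → ℝ), (a ⋆[ContinuousLinearMap.mul ℝ ℝ, volume] b)
      = (b ⋆[ContinuousLinearMap.mul ℝ ℝ, volume] a) := by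
    intro a b
    rw [← convolution_flip]
    congr 1
    ext
    simp
  rw [e, conv_right hg hf hcf, e]

open scoped Convolution in
theorem conv_comm2 {f g : (Fin 3 → ℝ) → ℝ} (hf : ContDiff ℝ 1 f) (hg : ContDiff ℝ 1 g)
    (hcf : HasCompactSupport f) (hcg : HasCompactSupport g) (i j : Fin 3) (x : Fin 3 → ℝ) :
    (pd i f ⋆[ContinuousLinearMap.mul ℝ ℝ, volume] pd j g) x
      = (pd j f ⋆[ContinuousLinearMap.mul ℝ ℝ, volume] pd i g) x := by
  rw [← conv_left hf (pd_continuous hg j) hcf, ← conv_right (pd_continuous hf j) hg hcg]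
  congr 1
  ext y
  rw [← conv_left hf hg.continuous hcf, ← conv_right hf.continuous hg hcg]

theorem pd_neg_comp {g : (Fin 3 → ℝ) → ℝ} (hg : Differentiable ℝ g) (i : Fin 3) (x : Fin 3 → ℝ) :
    pd i (fun y => g (-y)) x = - pd i g (-x) := by
  have h := (hg (-x)).hasFDerivAt.comp x (hasFDerivAt_id x).neg
  have h2 := pd_eq h i
  simp only [Function.comp_def] at h2
  exact h2.trans (by simp [pd])

theorem ibp {f g : (Fin 3 → ℝ) → ℝ} (hf : ContDiff ℝ 1 f) (hg : ContDiff ℝ 1 g)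
    (hcf : HasCompactSupport f) (hcg : HasCompactSupport g) (i j : Fin 3) :
    ∫ x, pd i f x * pd j g x = ∫ x, pd j f x * pd i g x := by
  have h := conv_comm2 hf (g := fun y => g (-y)) (hg.comp contDiff_neg) hcf
    (hcg.comp_homeomorph (Homeomorph.neg _)) i j 0
  simp only [convolution_def, pd_neg_comp (hg.differentiable (by norm_num)), zero_sub, neg_neg, ContinuousLinearMap.mul_apply',
    mul_neg, integral_neg] at h
  linarith

/-- energy -/
noncomputable def gr (W : Fin 3 → (Fin 3 → ℝ) → ℝ) (x : Fin 3 → ℝ) : ℝ :=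
  ∑ i : Fin 3, ∑ j : Fin 3, (pd j (W i) x) ^ 2

/-- symmetric gradient energy plus lower order -/
noncomputable def en (W : Fin 3 → (Fin 3 → ℝ) → ℝ) (x : Fin 3 → ℝ) : ℝ :=
  ∑ i : Fin 3, ∑ j : Fin 3, (pd j (W i) x + pd i (W j) x) ^ 2 + ∑ i : Fin 3, W i x ^ 2

theorem korn_compact (W : Fin 3 → (Fin 3 → ℝ) → ℝ) (hW : ∀ i, ContDiff ℝ 1 (W i))
    (hc : ∀ i, HasCompactSupport (W i)) :
    ∫⁻ x, ENNReal.ofReal (gr W x) ≤ ∫⁻ x, ENNReal.ofReal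
      (∑ i : Fin 3, ∑ j : Fin 3, (pd j (W i) x + pd i (W j) x) ^ 2) := by
  have hcont : ∀ i j, Continuous (pd j (W i)) := fun i j => pd_continuous (hW i) j
  have hint : ∀ i j k l, Integrable (fun x => pd j (W i) x * pd l (W k) x) := fun i j k l =>
    ((hcont i j).mul (hcont k l)).integrable_of_hasCompactSupport
      ((pd_compact (hc i) j).mul_right)
  have h1 : Integrable (gr W) := by
    unfold gr
    refine integrable_finsetSum _ fun i _ => integrable_finsetSum _ fun j _ => ?_
    simpa [sq] using hint i j i j
  have h2 : Integrable (fun x => ∑ i : Fin 3, ∑ j : Fin 3, pd j (W i) x * pd i (W j) x) := by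
    refine integrable_finsetSum _ fun i _ => integrable_finsetSum _ fun j _ => hint _ _ _ _
  have h3 : ∫ x, ∑ i : Fin 3, ∑ j : Fin 3, pd j (W i) x * pd i (W j) x
      = ∫ x, (∑ i : Fin 3, pd i (W i) x) ^ 2 := by
    have : ∀ x, (∑ i : Fin 3, pd i (W i) x) ^ 2
        = ∑ i : Fin 3, ∑ j : Fin 3, pd i (W i) x * pd j (W j) x := by
      intro x
      rw [sq, Finset.sum_mul_sum]
    simp_rw [this]
    rw [integral_finsetSum _ (fun i _ => integrable_finsetSum _ fun j _ => hint _ _ _ _),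
      integral_finsetSum _ (fun i _ => integrable_finsetSum _ fun j _ => hint _ _ _ _)]
    refine Finset.sum_congr rfl fun i _ => ?_
    rw [integral_finsetSum _ (fun j _ => hint _ _ _ _),
      integral_finsetSum _ (fun j _ => hint _ _ _ _)]
    refine Finset.sum_congr rfl fun j _ => ?_
    exact ibp (hW i) (hW j) (hc i) (hc j) j i
  have h4 : ∀ x, ∑ i : Fin 3, ∑ j : Fin 3, (pd j (W i) x + pd i (W j) x) ^ 2
      = 2 * gr W x + 2 * ∑ i : Fin 3, ∑ j : Fin 3, pd j (W i) x * pd i (W j) x := by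
    intro x
    simp only [gr, Fin.sum_univ_three]
    ring
  have g0 : ∀ x, 0 ≤ gr W x := fun x => by unfold gr; positivity
  rw [← ofReal_integral_eq_lintegral_ofReal h1 (Filter.Eventually.of_forall g0),
    ← ofReal_integral_eq_lintegral_ofReal]
  · apply ENNReal.ofReal_le_ofReal
    simp_rw [h4]
    rw [integral_add (h1.const_mul 2) (h2.const_mul 2), integral_const_mul, integral_const_mul, h3]
    have : 0 ≤ ∫ x, (∑ i : Fin 3, pd i (W i) x) ^ 2 := integral_nonneg fun x => by positivity
    have : 0 ≤ ∫ x, gr W x := integral_nonneg g0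
    linarith
  · simp_rw [h4]
    exact (h1.const_mul 2).add (h2.const_mul 2)
  · exact Filter.Eventually.of_forall fun x => by positivity

theorem exists_cutoff : ∃ B : ℝ, 0 ≤ B ∧ ∀ n : ℕ, ∃ χ : (Fin 3 → ℝ) → ℝ, ContDiff ℝ 1 χ ∧
    HasCompactSupport χ ∧ (∀ x, 0 ≤ χ x ∧ χ x ≤ 1) ∧ (∀ i x, |pd i χ x| ≤ B) ∧
    ∀ x ∈ Metric.ball (0 : Fin 3 → ℝ) (n + 1), χ =ᶠ[nhds x] fun _ => 1 := by
  let c : ContDiffBump (0 : Fin 3 → ℝ) := ⟨1, 2, by norm_num, by norm_num⟩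
  have hcd : ContDiff ℝ 1 c := c.contDiff
  obtain ⟨B, hB⟩ := (hcd.continuous_fderiv (by norm_num)).bounded_above_of_compact_support
    (c.hasCompactSupport.fderiv ℝ)
  have hB0 : 0 ≤ B := (norm_nonneg _).trans (hB 0)
  refine ⟨B, hB0, fun n => ?_⟩
  have hn : (0 : ℝ) < n + 1 := by positivity
  have hn1 : ((n : ℝ) + 1)⁻¹ ≤ 1 := inv_le_one_of_one_le₀ (by linarith [n.cast_nonneg (α := ℝ)])
  refine ⟨fun x => c (((n : ℝ) + 1)⁻¹ • x), hcd.comp (contDiff_const_smul _), ?_, ?_, ?_, ?_⟩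
  · exact c.hasCompactSupport.comp_homeomorph (Homeomorph.smulOfNeZero _ (inv_ne_zero hn.ne'))
  · exact fun x => ⟨c.nonneg, c.le_one⟩
  · intro i x
    have h := (hcd.differentiable (by norm_num) (((n : ℝ) + 1)⁻¹ • x)).hasFDerivAt.comp x
      ((hasFDerivAt_id x).const_smul ((n : ℝ) + 1)⁻¹)
    have h2 := pd_eq h i
    replace h2 : pd i (fun x => c (((n : ℝ) + 1)⁻¹ • x)) x = _ := h2
    rw [h2]
    simp only [ContinuousLinearMap.comp_apply, _root_.smul_apply,
      ContinuousLinearMap.id_apply, map_smul, smul_eq_mul, abs_mul]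
    have h3 := (fderiv ℝ c (((n : ℝ) + 1)⁻¹ • x)).le_opNorm (Pi.single i 1)
    have h4 : ‖(Pi.single i 1 : Fin 3 → ℝ)‖ = 1 := by rw [Pi.norm_single]; simp
    rw [h4, mul_one, Real.norm_eq_abs] at h3
    rw [abs_of_pos (inv_pos.mpr hn)]
    calc _ ≤ 1 * B := by
          gcongr
          exact h3.trans (hB _)
      _ = B := one_mul B
  · intro x hx
    filter_upwards [Metric.isOpen_ball.mem_nhds hx] with y hy
    apply c.one_of_mem_closedBall
    simp only [mem_closedBall_zero_iff, mem_ball_zero_iff] at hy ⊢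
    rw [norm_smul, Real.norm_eq_abs, abs_of_pos (inv_pos.mpr hn), inv_mul_le_iff₀ hn]
    simpa [c] using hy.le

theorem korn_full : ∃ C : ℝ, 0 < C ∧ ∀ (W : Fin 3 → (Fin 3 → ℝ) → ℝ),
    (∀ i, ContDiff ℝ 1 (W i)) →
    ∫⁻ x, ENNReal.ofReal (gr W x) ≤ ENNReal.ofReal C * ∫⁻ x, ENNReal.ofReal (en W x) := by
  obtain ⟨B, hB0, hB⟩ := exists_cutoff
  refine ⟨2 + 24 * B ^ 2, by positivity, fun W hW => ?_⟩
  have key : ∀ n : ℕ, ∫⁻ x in Metric.ball (0 : Fin 3 → ℝ) (n + 1), ENNReal.ofReal (gr W x) ≤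
      ENNReal.ofReal (2 + 24 * B ^ 2) * ∫⁻ x, ENNReal.ofReal (en W x) := by
    intro n
    obtain ⟨χ, h1, h2, h3, h4, h5⟩ := hB n
    have hp : ∀ i j x, pd j (fun y => χ y * W i y) x = χ x * pd j (W i) x + W i x * pd j χ x := by
      intro i j x
      have := pd_eq ((h1.differentiable (by norm_num) x).hasFDerivAt.mul
        ((hW i).differentiable (by norm_num) x).hasFDerivAt) j
      replace this : pd j (fun y => χ y * W i y) x = _ := this
      rw [this]
      simp [pd]
    calc _ = ∫⁻ x in Metric.ball (0 : Fin 3 → ℝ) (n + 1),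
            ENNReal.ofReal (gr (fun i y => χ y * W i y) x) := by
          refine setLIntegral_congr_fun Metric.isOpen_ball.measurableSet fun x hx => ?_
          have e := h5 x hx
          have e1 : χ x = 1 := e.self_of_nhds
          have e2 : ∀ i, pd i χ x = 0 := by
            intro i
            unfold pd
            rw [e.fderiv_eq]
            simp
          simp [gr, hp, e1, e2]
      _ ≤ ∫⁻ x, ENNReal.ofReal (gr (fun i y => χ y * W i y) x) := setLIntegral_le_lintegral _ _
      _ ≤ _ := korn_compact _ (fun i => h1.mul (hW i)) (fun i => h2.mul_right)
      _ ≤ ∫⁻ x, ENNReal.ofReal (2 + 24 * B ^ 2) * ENNReal.ofReal (en W x) := by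
          refine lintegral_mono fun x => ?_
          rw [← ENNReal.ofReal_mul (by positivity)]
          apply ENNReal.ofReal_le_ofReal
          have hx : ∀ i j, (pd j (fun y => χ y * W i y) x + pd i (fun y => χ y * W j y) x) ^ 2
              ≤ 2 * (pd j (W i) x + pd i (W j) x) ^ 2
                + 4 * (W i x ^ 2 * B ^ 2 + W j x ^ 2 * B ^ 2) := by
            intro i j
            rw [hp, hp]
            have b : ∀ i, (pd i χ x) ^ 2 ≤ B ^ 2 := fun i => by
              rw [← sq_abs]
              exact pow_le_pow_left₀ (abs_nonneg _) (h4 i x) 2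
            have c2 : χ x ^ 2 ≤ 1 := pow_le_one₀ (h3 x).1 (h3 x).2
            have t1 := mul_le_mul_of_nonneg_left (b j) (sq_nonneg (W i x))
            have t2 := mul_le_mul_of_nonneg_left (b i) (sq_nonneg (W j x))
            have t3 := mul_le_mul_of_nonneg_right c2 (sq_nonneg (pd j (W i) x + pd i (W j) x))
            nlinarith [sq_nonneg (χ x * (pd j (W i) x + pd i (W j) x)
              - (W i x * pd j χ x + W j x * pd i χ x)), sq_nonneg (W i x * pd j χ x - W j x * pd i χ x)]
          have hs := Finset.sum_le_sum fun i (_ : i ∈ Finset.univ) =>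
            Finset.sum_le_sum fun j (_ : j ∈ Finset.univ) => hx i j
          refine hs.trans ?_
          unfold en
          set T : Fin 3 → Fin 3 → ℝ := fun i j => pd j (W i) x + pd i (W j) x
          have hT : 0 ≤ ∑ i, ∑ j, T i j ^ 2 := by positivity
          have hw : 0 ≤ ∑ i, W i x ^ 2 := by positivity
          have e : ∑ i, ∑ j, (2 * T i j ^ 2 + 4 * (W i x ^ 2 * B ^ 2 + W j x ^ 2 * B ^ 2))
              = 2 * ∑ i, ∑ j, T i j ^ 2 + 24 * B ^ 2 * ∑ i, W i x ^ 2 := by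
            simp only [Fin.sum_univ_three]; ring
          rw [e]
          nlinarith [mul_nonneg (sq_nonneg B) hT, mul_nonneg (sq_nonneg B) hw]
      _ = _ := lintegral_const_mul' _ _ ENNReal.ofReal_ne_top
  have hU : (⋃ n : ℕ, Metric.ball (0 : Fin 3 → ℝ) (n + 1)) = Set.univ := by
    rw [Set.eq_univ_iff_forall]
    intro x
    obtain ⟨n, hn⟩ := exists_nat_gt ‖x‖
    simp only [Set.mem_iUnion, mem_ball_zero_iff]
    exact ⟨n, by linarith⟩
  rw [← setLIntegral_univ, ← hU, setLIntegral_iUnion_of_directed]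
  · exact iSup_le key
  · apply Monotone.directed_le
    intro a b hab
    apply Metric.ball_subset_ball
    have : (a : ℝ) ≤ b := by exact_mod_cast hab
    linarith

/-- diagonal reflection coefficients -/
noncomputable def sg (k i : Fin 3) : ℝ := if i = 2 then -((k : ℕ) + 1 : ℝ) else 1

/-- extension weights -/
noncomputable def ak : Fin 3 → ℝ := ![6, -8, 3]

/-- reflections -/
noncomputable def rf (k : Fin 3) : (Fin 3 → ℝ) →L[ℝ] (Fin 3 → ℝ) :=
  ContinuousLinearMap.pi fun i => sg k i • ContinuousLinearMap.proj i

theorem rf_apply (k : Fin 3) (x : Fin 3 → ℝ) (i : Fin 3) : rf k x i = sg k i * x i := by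
  simp [rf]

theorem rf_single (k j : Fin 3) : rf k (Pi.single j 1) = sg k j • Pi.single j 1 := by
  ext i
  rw [rf_apply]
  by_cases h : i = j
  · subst h; simp
  · simp [h]

theorem sg_two (k : Fin 3) : sg k 2 ≤ -1 := by
  simp only [sg, if_true]
  linarith [(Nat.cast_nonneg (k : ℕ) : (0 : ℝ) ≤ ((k : ℕ) : ℝ))]

theorem sg_ne (k : Fin 3) {i : Fin 3} (h : i ≠ 2) : sg k i = 1 := by
  simp [sg, h]

theorem sg_abs (k i : Fin 3) : |sg k i| ≤ 3 := by
  fin_cases k <;> fin_cases i <;> simp [sg] <;> norm_num [abs_le]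

theorem ak_abs (k : Fin 3) : |ak k| ≤ 8 := by
  fin_cases k <;> simp [ak] <;> norm_num [abs_le]

theorem rf_zero (k : Fin 3) {x : Fin 3 → ℝ} (hx : x 2 = 0) : rf k x = x := by
  ext i
  rw [rf_apply]
  by_cases h : i = 2
  · subst h; simp [hx]
  · simp [sg_ne k h]

theorem rf_neg (k : Fin 3) {x : Fin 3 → ℝ} (hx : 0 ≤ x 2) : rf k x 2 ≤ 0 := by
  rw [rf_apply]
  nlinarith [sg_two k]

/-- extension operator -/
noncomputable def Ex (b : Fin 3 → ℝ) (f : (Fin 3 → ℝ) → ℝ) (x : Fin 3 → ℝ) : ℝ :=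
  if x 2 ≤ 0 then f x else ∑ k, b k * f (rf k x)

theorem Ex_nonneg {b : Fin 3 → ℝ} (hb : ∑ k, b k = 1) (f : (Fin 3 → ℝ) → ℝ) {x : Fin 3 → ℝ}
    (hx : 0 ≤ x 2) : Ex b f x = ∑ k, b k * f (rf k x) := by
  unfold Ex
  split_ifs with h
  · have h0 : x 2 = 0 := le_antisymm h hx
    simp_rw [rf_zero _ h0, ← Finset.sum_mul, hb, one_mul]
  · rfl

theorem cont_pd_on {f : (Fin 3 → ℝ) → ℝ} {s : Set (Fin 3 → ℝ)} (hs : IsOpen s)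
    (hf : ContDiffOn ℝ 1 f s) (i : Fin 3) : ContinuousOn (pd i f) s := by
  have := hf.continuousOn_fderiv_of_isOpen hs le_rfl
  unfold pd
  exact this.clm_apply continuousOn_const

theorem isOpen_z (ε : ℝ) : IsOpen {x : Fin 3 → ℝ | x 2 < ε} :=
  isOpen_lt (continuous_apply 2) continuous_const

theorem Ex_C1 {ε : ℝ} (hε : 0 < ε) {f : (Fin 3 → ℝ) → ℝ}
    (hf : ContDiffOn ℝ 1 f {x | x 2 < ε}) {b : Fin 3 → ℝ} (hb : ∑ k, b k = 1)
    (hb2 : ∑ k, b k * sg k 2 = 1) :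
    ContDiff ℝ 1 (Ex b f) ∧ (∀ x, x 2 ≤ 0 → ∀ j, pd j (Ex b f) x = pd j f x) ∧
    (∀ x, 0 ≤ x 2 → ∀ j, pd j (Ex b f) x = ∑ k, b k * (sg k j * pd j f (rf k x))) := by
  have ho := isOpen_z ε
  have hfd : ∀ x : Fin 3 → ℝ, x 2 ≤ 0 → HasFDerivAt f (fderiv ℝ f x) x := fun x hx =>
    ((hf.differentiableOn (by norm_num)).differentiableAt
      (ho.mem_nhds (show x 2 < ε by linarith))).hasFDerivAt
  have hfc : ContinuousOn (fderiv ℝ f) {x | x 2 < ε} := hf.continuousOn_fderiv_of_isOpen ho le_rfl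
  set G : (Fin 3 → ℝ) → (Fin 3 → ℝ) →L[ℝ] ℝ :=
    fun x => ∑ k, b k • (fderiv ℝ f (rf k x)).comp (rf k) with hG
  have hGs : ∀ x j, G x (Pi.single j 1) = ∑ k, b k * (sg k j * pd j f (rf k x)) := by
    intro x j
    simp [hG, pd, rf_single]
  have hgd : ∀ x : Fin 3 → ℝ, 0 ≤ x 2 →
      HasFDerivAt (fun x => ∑ k, b k * f (rf k x)) (G x) x := by
    intro x hx
    refine HasFDerivAt.fun_sum fun k _ => ?_
    exact ((hfd _ (rf_neg k hx)).comp x (rf k).hasFDerivAt).const_mul (b k)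
  have hG0 : ∀ x : Fin 3 → ℝ, x 2 = 0 → fderiv ℝ f x = G x := by
    intro x hx
    refine ContinuousLinearMap.coe_injective (LinearMap.pi_ext' fun j => LinearMap.ext_ring ?_)
    have := hGs x j
    simp only [rf_zero _ hx] at this
    have e : ∑ k, b k * (sg k j * pd j f x) = pd j f x := by
      simp_rw [← mul_assoc, ← Finset.sum_mul]
      by_cases h : j = 2
      · subst h; rw [hb2, one_mul]
      · simp_rw [sg_ne _ h, mul_one]; rw [hb, one_mul]
    rw [e] at this
    simpa [pd] using this.symm
  have hGc : ContinuousOn G {x | 0 ≤ x 2} := by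
    refine continuousOn_finsetSum _ fun k _ => ?_
    have h1 : ContinuousOn (fun x => fderiv ℝ f (rf k x)) {x | 0 ≤ x 2} :=
      hfc.comp (rf k).continuous.continuousOn fun x hx => lt_of_le_of_lt (rf_neg k hx) hε
    have h2 : ContinuousOn (fun x => (fderiv ℝ f (rf k x)).comp (rf k)) {x | 0 ≤ x 2} :=
      h1.clm_comp continuousOn_const
    exact h2.const_smul (b k)
  have hcl : closure {x : Fin 3 → ℝ | x 2 ≤ 0} = {x | x 2 ≤ 0} :=
    (isClosed_le (continuous_apply 2) continuous_const).closure_eq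
  have hfr : frontier {x : Fin 3 → ℝ | x 2 ≤ 0} ⊆ {x | x 2 = 0} :=
    frontier_le_subset_eq (continuous_apply 2) continuous_const
  have hcl2 : closure {x : Fin 3 → ℝ | ¬ x 2 ≤ 0} ⊆ {x | 0 ≤ x 2} :=
    closure_minimal (fun x hx => (not_le.mp hx).le)
      (isClosed_le continuous_const (continuous_apply 2))
  have hDc : Continuous (fun x : Fin 3 → ℝ => if x 2 ≤ 0 then fderiv ℝ f x else G x) := by
    refine continuous_if (fun x hx => hG0 x (hfr hx)) ?_ (hGc.mono hcl2)
    rw [hcl]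
    exact hfc.mono fun x hx => lt_of_le_of_lt hx hε
  have hD : ∀ x, HasFDerivAt (Ex b f) (if x 2 ≤ 0 then fderiv ℝ f x else G x) x := by
    intro x
    rcases lt_trichotomy (x 2) 0 with h | h | h
    · rw [if_pos h.le]
      refine (hfd x h.le).congr_of_eventuallyEq ?_
      filter_upwards [(isOpen_z 0).mem_nhds h] with y hy
      have hy' : y 2 ≤ 0 := le_of_lt hy
      simp [Ex, hy']
    · rw [if_pos h.le]
      rw [← hasFDerivWithinAt_univ]
      have hu : (Set.univ : Set (Fin 3 → ℝ)) = {y | y 2 ≤ 0} ∪ {y | 0 ≤ y 2} := by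
        ext y; simpa using le_total _ _
      rw [hu]
      refine HasFDerivWithinAt.union ?_ ?_
      · refine (hfd x h.le).hasFDerivWithinAt.congr (fun y hy => ?_) ?_
        · have hy' : y 2 ≤ 0 := hy
          simp [Ex, hy']
        · simp [Ex, h]
      · rw [hG0 x h]
        exact (hgd x h.ge).hasFDerivWithinAt.congr (fun y hy => Ex_nonneg hb f hy)
          (Ex_nonneg hb f h.ge)
    · rw [if_neg (not_le.mpr h)]
      refine (hgd x h.le).congr_of_eventuallyEq ?_
      filter_upwards [(isOpen_lt continuous_const (continuous_apply 2)).mem_nhds h] with y hy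
      exact Ex_nonneg hb f (le_of_lt hy)
  refine ⟨contDiff_one_iff_hasFDerivAt.mpr ⟨_, hDc, hD⟩, ?_, ?_⟩
  · intro x hx j
    rw [pd_eq (hD x), if_pos hx, pd]
  · intro x hx j
    rw [pd_eq (hD x), ← hGs]
    split_ifs with h
    · rw [hG0 x (le_antisymm h hx)]
    · rfl

theorem rf_lintegral (k : Fin 3) (F : (Fin 3 → ℝ) → ENNReal) :
    ∫⁻ x in {x | 0 ≤ x 2}, F (rf k x) ≤ ∫⁻ x in {x | x 2 ≤ 0}, F x := by
  have hinj : Function.Injective (rf k) := by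
    intro x y h
    ext i
    have := congrFun h i
    rw [rf_apply, rf_apply] at this
    refine mul_left_cancel₀ ?_ this
    by_cases hi : i = 2
    · subst hi; linarith [sg_two k]
    · simp [sg_ne k hi]
  have hemb : MeasurableEmbedding (rf k) := (rf k).continuous.measurableEmbedding hinj
  have hdet : LinearMap.det ((rf k : (Fin 3 → ℝ) →L[ℝ] (Fin 3 → ℝ)) : (Fin 3 → ℝ) →ₗ[ℝ] (Fin 3 → ℝ))
      = sg k 2 := by
    have : ((rf k : (Fin 3 → ℝ) →L[ℝ] (Fin 3 → ℝ)) : (Fin 3 → ℝ) →ₗ[ℝ] (Fin 3 → ℝ))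
        = Matrix.toLin' (Matrix.diagonal (sg k)) := by
      ext i j
      simp [rf_single, Matrix.mulVec_diagonal, Pi.single_apply]
      split_ifs with h
      · rw [h]
      · rfl
    rw [this, LinearMap.det_toLin', Matrix.det_diagonal, Fin.prod_univ_three,
      sg_ne k (by decide), sg_ne k (by decide)]
    ring
  have hmap : Measure.map (rf k) (volume : Measure (Fin 3 → ℝ)) ≤ volume := by
    have h := Real.map_linearMap_volume_pi_eq_smul_volume_pi
      (f := ((rf k : (Fin 3 → ℝ) →L[ℝ] (Fin 3 → ℝ)) : (Fin 3 → ℝ) →ₗ[ℝ] (Fin 3 → ℝ)))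
      (by rw [hdet]; linarith [sg_two k])
    rw [hdet] at h
    have h' : Measure.map (rf k) (volume : Measure (Fin 3 → ℝ)) = _ := h
    rw [h']
    have h1 : ENNReal.ofReal |(sg k 2)⁻¹| ≤ 1 := by
      rw [ENNReal.ofReal_le_one, abs_inv]
      apply inv_le_one_of_one_le₀
      rw [abs_of_neg (by linarith [sg_two k])]
      linarith [sg_two k]
    refine Measure.le_iff.mpr fun s _ => ?_
    simp only [Measure.smul_apply, smul_eq_mul]
    exact mul_le_of_le_one_left' h1
  have hpre : (rf k) ⁻¹' {x | x 2 ≤ 0} = {x | 0 ≤ x 2} := by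
    ext x
    simp only [Set.mem_preimage, Set.mem_ofPred_eq, rf_apply]
    constructor
    · intro h; nlinarith [sg_two k]
    · intro h; nlinarith [sg_two k]
  rw [← hpre, ← hemb.lintegral_map, ← hemb.restrict_map]
  exact lintegral_mono' (Measure.restrict_mono le_rfl hmap) le_rfl

theorem cs3 (c t : Fin 3 → ℝ) (hc : ∀ k, |c k| ≤ 72) :
    (∑ k, c k * t k) ^ 2 ≤ 15552 * ∑ k, t k ^ 2 := by
  refine (Finset.sum_mul_sq_le_sq_mul_sq _ c t).trans ?_
  gcongr
  have : ∀ k, c k ^ 2 ≤ 5184 := fun k => by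
    rw [← sq_abs]; nlinarith [hc k, abs_nonneg (c k)]
  rw [Fin.sum_univ_three]
  linarith [this 0, this 1, this 2]

theorem en_nonneg (W : Fin 3 → (Fin 3 → ℝ) → ℝ) (x : Fin 3 → ℝ) : 0 ≤ en W x := by
  unfold en; positivity

theorem en_cont {w : Fin 3 → (Fin 3 → ℝ) → ℝ} {s : Set (Fin 3 → ℝ)} (hs : IsOpen s)
    (hw : ∀ i, ContDiffOn ℝ 1 (w i) s) : ContinuousOn (en w) s := by
  have h1 : ∀ i j, ContinuousOn (pd j (w i)) s := fun i j => cont_pd_on hs (hw i) j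
  have h2 : ∀ i, ContinuousOn (w i) s := fun i => (hw i).continuousOn
  unfold en
  fun_prop

theorem korn_half : ∃ C : ℝ, 0 < C ∧ ∀ (w : Fin 3 → (Fin 3 → ℝ) → ℝ) (ε : ℝ), 0 < ε →
    (∀ i, ContDiffOn ℝ 1 (w i) {x | x 2 < ε}) →
    ∫⁻ x in {x | x 2 ≤ 0}, ENNReal.ofReal (gr w x)
      ≤ ENNReal.ofReal C * ∫⁻ x in {x | x 2 ≤ 0}, ENNReal.ofReal (en w x) := by
  obtain ⟨C, hC, hK⟩ := korn_full
  refine ⟨C * 46657, by positivity, fun w ε hε hw => ?_⟩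
  set b : Fin 3 → Fin 3 → ℝ := fun i k => ak k * sg k i
  have hb : ∀ i, ∑ k, b i k = 1 := by
    intro i
    fin_cases i <;> simp [b, ak, sg, Fin.sum_univ_three] <;> norm_num
  have hb2 : ∀ i, ∑ k, b i k * sg k 2 = 1 := by
    intro i
    fin_cases i <;> simp [b, ak, sg, Fin.sum_univ_three] <;> norm_num
  have hE := fun i => Ex_C1 hε (hw i) (hb i) (hb2 i)
  set W : Fin 3 → (Fin 3 → ℝ) → ℝ := fun i => Ex (b i) (w i) with hW
  have hneg : ∀ x : Fin 3 → ℝ, x 2 ≤ 0 → gr W x = gr w x ∧ en W x = en w x := by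
    intro x hx
    have h1 : ∀ i j, pd j (W i) x = pd j (w i) x := fun i j => (hE i).2.1 x hx j
    have h2 : ∀ i, W i x = w i x := fun i => by simp [hW, Ex, hx]
    constructor
    · simp only [gr, h1]
    · simp only [en, h1, h2]
  have hpos : ∀ x : Fin 3 → ℝ, 0 ≤ x 2 → en W x ≤ 15552 * ∑ k, en w (rf k x) := by
    intro x hx
    have h1 : ∀ i j, pd j (W i) x = ∑ k, b i k * (sg k j * pd j (w i) (rf k x)) :=
      fun i j => (hE i).2.2 x hx j
    have h2 : ∀ i, W i x = ∑ k, b i k * w i (rf k x) := fun i => Ex_nonneg (hb i) _ hx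
    have t1 : ∀ i j, (pd j (W i) x + pd i (W j) x) ^ 2
        ≤ 15552 * ∑ k, (pd j (w i) (rf k x) + pd i (w j) (rf k x)) ^ 2 := by
      intro i j
      have e : pd j (W i) x + pd i (W j) x = ∑ k, (ak k * sg k i * sg k j) *
          (pd j (w i) (rf k x) + pd i (w j) (rf k x)) := by
        rw [h1, h1, ← Finset.sum_add_distrib]
        refine Finset.sum_congr rfl fun k _ => ?_
        simp only [b]; ring
      rw [e]
      refine cs3 _ _ fun k => ?_
      rw [abs_mul, abs_mul]
      calc _ ≤ (8 : ℝ) * 3 * 3 := by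
            gcongr
            · exact ak_abs k
            · exact sg_abs _ _
            · exact sg_abs _ _
        _ = 72 := by norm_num
    have t2 : ∀ i, (W i x) ^ 2 ≤ 15552 * ∑ k, (w i (rf k x)) ^ 2 := by
      intro i
      rw [h2]
      refine cs3 _ _ fun k => ?_
      simp only [b]
      rw [abs_mul]
      calc _ ≤ (8 : ℝ) * 3 := by
            gcongr
            · exact ak_abs k
            · exact sg_abs _ _
        _ ≤ 72 := by norm_num
    have s1 := Finset.sum_le_sum fun i (_ : i ∈ Finset.univ) =>
            Finset.sum_le_sum fun j (_ : j ∈ Finset.univ) => t1 i j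
    have s2 := Finset.sum_le_sum fun i (_ : i ∈ Finset.univ) => t2 i
    refine (add_le_add s1 s2).trans (le_of_eq ?_)
    simp only [en]
    rw [Finset.sum_add_distrib, mul_add]
    simp_rw [← Finset.mul_sum]
    congr 2
    · rw [Finset.sum_comm (s := (Finset.univ : Finset (Fin 3))) (t := (Finset.univ : Finset (Fin 3)))
        (f := fun k i => ∑ j, (pd j (w i) (rf k x) + pd i (w j) (rf k x)) ^ 2)]
      exact Finset.sum_congr rfl fun i _ => Finset.sum_comm
    · exact Finset.sum_comm
  have hcw := en_cont (isOpen_z ε) hw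
  have hm : MeasurableSet {x : Fin 3 → ℝ | x 2 ≤ 0} :=
    (isClosed_le (continuous_apply 2) continuous_const).measurableSet
  have hm2 : MeasurableSet {x : Fin 3 → ℝ | 0 ≤ x 2} :=
    (isClosed_le continuous_const (continuous_apply 2)).measurableSet
  set I := ∫⁻ x in {x | x 2 ≤ 0}, ENNReal.ofReal (en w x) with hI
  have hposI : ∫⁻ x in {x | 0 ≤ x 2}, ENNReal.ofReal (en W x) ≤ ENNReal.ofReal 46656 * I := by
    calc _ ≤ ∫⁻ x in {x | 0 ≤ x 2},
            ENNReal.ofReal 15552 * ∑ k, ENNReal.ofReal (en w (rf k x)) := by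
          refine setLIntegral_mono' hm2 fun x hx => ?_
          rw [← ENNReal.ofReal_sum_of_nonneg (fun k _ => en_nonneg _ _),
            ← ENNReal.ofReal_mul (by norm_num)]
          exact ENNReal.ofReal_le_ofReal (hpos x hx)
      _ = ENNReal.ofReal 15552 * ∑ k, ∫⁻ x in {x | 0 ≤ x 2}, ENNReal.ofReal (en w (rf k x)) := by
          rw [lintegral_const_mul' _ _ ENNReal.ofReal_ne_top, lintegral_finsetSum']
          intro k _
          have : ContinuousOn (fun x => en w (rf k x)) {x | 0 ≤ x 2} :=
            hcw.comp (rf k).continuous.continuousOn fun x hx => lt_of_le_of_lt (rf_neg k hx) hε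
          exact (this.aemeasurable hm2).ennreal_ofReal
      _ ≤ ENNReal.ofReal 15552 * ∑ k : Fin 3, I := by
          gcongr with k
          exact rf_lintegral k fun x => ENNReal.ofReal (en w x)
      _ = ENNReal.ofReal 46656 * I := by
          rw [Fin.sum_univ_three, ← two_mul, ← add_one_mul, ← mul_assoc]
          congr 1
          norm_num
  calc _ = ∫⁻ x in {x | x 2 ≤ 0}, ENNReal.ofReal (gr W x) :=
        setLIntegral_congr_fun hm fun x hx => by
          show ENNReal.ofReal _ = ENNReal.ofReal _
          rw [(hneg x hx).1]
    _ ≤ ∫⁻ x, ENNReal.ofReal (gr W x) := setLIntegral_le_lintegral _ _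
    _ ≤ _ := hK W fun i => (hE i).1
    _ ≤ ENNReal.ofReal C * (I + ENNReal.ofReal 46656 * I) := by
        gcongr
        have hu : (Set.univ : Set (Fin 3 → ℝ)) = {y | y 2 ≤ 0} ∪ {y | 0 ≤ y 2} := by
          ext y; simpa using le_total _ _
        rw [← setLIntegral_univ, hu]
        refine (lintegral_union_le _ _ _).trans (add_le_add (le_of_eq ?_) hposI)
        exact setLIntegral_congr_fun hm fun x hx => by
          show ENNReal.ofReal _ = ENNReal.ofReal _
          rw [(hneg x hx).2]
    _ = _ := by
        rw [ENNReal.ofReal_mul hC.le, mul_assoc, ← one_add_mul]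
        congr 2
        norm_num

theorem korn_open : ∃ C : ℝ, 0 < C ∧ ∀ (w : Fin 3 → (Fin 3 → ℝ) → ℝ),
    (∀ i, ContDiffOn ℝ 1 (w i) lowerHalf) →
    ∫⁻ x in lowerHalf, ENNReal.ofReal (gr w x)
      ≤ ENNReal.ofReal C * ∫⁻ x in lowerHalf, ENNReal.ofReal (en w x) := by
  obtain ⟨C, hC, hK⟩ := korn_half
  refine ⟨C, hC, fun w hw => ?_⟩
  have key : ∀ n : ℕ, ∫⁻ x in {x : Fin 3 → ℝ | x 2 ≤ -(1 / ((n : ℝ) + 1))},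
      ENNReal.ofReal (gr w x) ≤ ENNReal.ofReal C * ∫⁻ x in lowerHalf, ENNReal.ofReal (en w x) := by
    intro n
    set ε : ℝ := 1 / ((n : ℝ) + 1) with hεd
    have hε : 0 < ε := by positivity
    set a : Fin 3 → ℝ := Pi.single 2 (-ε) with ha
    have ha2 : a 2 = -ε := by simp [ha]
    have h := hK (fun i x => w i (x + a)) ε hε (fun i => by
      refine (hw i).comp (contDiff_id.add contDiff_const).contDiffOn ?_
      intro x hx
      have hx' : x 2 < ε := hx
      show (x + a) 2 < 0
      rw [Pi.add_apply, ha2]; linarith)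
    have hpd : ∀ i j x, pd j (fun x => w i (x + a)) x = pd j (w i) (x + a) := by
      intro i j x
      simp only [pd, fderiv_comp_add_right]
    have hpre : (fun x => x + a) ⁻¹' {x : Fin 3 → ℝ | x 2 ≤ -ε} = {x | x 2 ≤ 0} := by
      ext x
      simp [ha2]
    have hsh : ∀ F : (Fin 3 → ℝ) → ENNReal, ∫⁻ x in {x | x 2 ≤ 0}, F (x + a)
        = ∫⁻ x in {x : Fin 3 → ℝ | x 2 ≤ -ε}, F x := by
      intro F
      rw [← hpre]
      exact (measurePreserving_add_right volume a).setLIntegral_comp_preimage_emb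
        (measurableEmbedding_addRight a) F _
    have e1 := hsh fun x => ENNReal.ofReal (gr w x)
    have e2 := hsh fun x => ENNReal.ofReal (en w x)
    have h' : ∫⁻ x in {x | x 2 ≤ 0}, ENNReal.ofReal (gr w (x + a))
      ≤ ENNReal.ofReal C * ∫⁻ x in {x | x 2 ≤ 0}, ENNReal.ofReal (en w (x + a)) := by
      simpa only [gr, en, hpd] using h
    rw [e1, e2] at h'
    refine h'.trans ?_
    gcongr
    intro x hx
    have hx' : x 2 ≤ -ε := hx
    show x 2 < 0
    linarith
  have hU : lowerHalf = ⋃ n : ℕ, {x : Fin 3 → ℝ | x 2 ≤ -(1 / ((n : ℝ) + 1))} := by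
    ext x
    simp only [lowerHalf, Set.mem_iUnion, Set.mem_ofPred_eq]
    constructor
    · intro h
      obtain ⟨n, hn⟩ := exists_nat_one_div_lt (show 0 < - x 2 by linarith)
      exact ⟨n, by linarith⟩
    · rintro ⟨n, hn⟩
      have : (0 : ℝ) < 1 / ((n : ℝ) + 1) := by positivity
      linarith
  conv_lhs => rw [hU]
  rw [setLIntegral_iUnion_of_directed]
  · exact iSup_le key
  · apply Monotone.directed_le
    intro m n hmn x hx
    have hx' : x 2 ≤ -(1 / ((m : ℝ) + 1)) := hx
    show x 2 ≤ -(1 / ((n : ℝ) + 1))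
    have := one_div_le_one_div_of_le (show (0 : ℝ) < m + 1 by positivity)
      (show (m : ℝ) + 1 ≤ n + 1 by exact_mod_cast Nat.succ_le_succ hmn)
    linarith

theorem alg_one {c M : ℝ} (hc : 0 < c) (hM : 0 ≤ M) (p V : Fin 3 → ℝ) (H g : Fin 3 → Fin 3 → ℝ)
    (hq : c ≤ p 2) (hp : ∀ i, |p i| ≤ M) (hH : ∀ i j, |H i j| ≤ M) (G dw : Fin 3 → Fin 3 → ℝ)
    (hG : ∀ i j, G i j = if j = 2 then g i 2 / p 2 else g i j - p j / p 2 * g i 2)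
    (hdw : ∀ i j, dw i j = (if i = 2 then 0 else g i j) + (p i * g 2 j + V 2 * H j i)) :
    ∑ i, ∑ j, (dw i j + dw j i) ^ 2
      + ∑ i, ((if i = 2 then 0 else V i) + p i * V 2) ^ 2
      ≤ (648 * (M + 1) ^ 4 / c + 72 * M ^ 2 + 6 + 6 * M ^ 2) *
        ((∑ i, ∑ j, ((G i j + G j i) / 2) ^ 2) * p 2 + ∑ i, V i ^ 2) := by
  have hq0 : p 2 ≠ 0 := by linarith
  set P : Fin 3 → Fin 3 → ℝ := fun a i => if a = 2 then p i else if a = i then 1 else 0 with hP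
  set T : Fin 3 → Fin 3 → ℝ := fun i j => (G i j + G j i) / 2 with hT
  have hPb : ∀ a i, |P a i| ≤ M + 1 := by
    intro a i
    simp only [hP]
    split_ifs
    · linarith [hp i]
    · simp [hM]
    · simp; linarith
  have hid : ∀ i j, dw i j + dw j i
      = 2 * ∑ x : Fin 3 × Fin 3, (P x.1 i * P x.2 j) * T x.1 x.2 + V 2 * (H j i + H i j) := by
    intro i j
    rw [Fintype.sum_prod_type]
    simp only [Fin.sum_univ_three, hT, hG, hdw, hP]
    fin_cases i <;> fin_cases j <;> simp <;> field_simp <;> ring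
  set SS := ∑ i, ∑ j, T i j ^ 2 with hSS
  have hSS0 : 0 ≤ SS := by positivity
  set U := ∑ i, V i ^ 2 with hU
  have hV : ∀ i, V i ^ 2 ≤ U := fun i =>
    Finset.single_le_sum (f := fun i => V i ^ 2) (fun i _ => sq_nonneg _) (Finset.mem_univ i)
  have hU0 : 0 ≤ U := by positivity
  have hp2 : ∀ i, p i ^ 2 ≤ M ^ 2 := fun i => by
    rw [← sq_abs]; exact pow_le_pow_left₀ (abs_nonneg _) (hp i) 2
  have hb1 : ∀ i j, (dw i j + dw j i) ^ 2 ≤ 72 * (M + 1) ^ 4 * SS + 8 * M ^ 2 * U := by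
    intro i j
    have h1 := Finset.sum_mul_sq_le_sq_mul_sq (Finset.univ : Finset (Fin 3 × Fin 3))
      (fun x => P x.1 i * P x.2 j) (fun x => T x.1 x.2)
    have h2 : ∑ x : Fin 3 × Fin 3, (P x.1 i * P x.2 j) ^ 2 ≤ 9 * (M + 1) ^ 4 := by
      have : ∀ x : Fin 3 × Fin 3, (P x.1 i * P x.2 j) ^ 2 ≤ (M + 1) ^ 4 := by
        intro x
        rw [← sq_abs, abs_mul]
        calc _ ≤ ((M + 1) * (M + 1)) ^ 2 := by
              gcongr
              · exact hPb _ _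
              · exact hPb _ _
          _ = _ := by ring
      refine (Finset.sum_le_card_nsmul _ _ _ fun x _ => this x).trans (le_of_eq ?_)
      simp [Finset.card_univ]
    have h3 : ∑ x : Fin 3 × Fin 3, T x.1 x.2 ^ 2 = SS := by
      rw [Fintype.sum_prod_type]
    rw [h3] at h1
    have h4 := h1.trans (mul_le_mul_of_nonneg_right h2 hSS0)
    have h5 : (V 2 * (H j i + H i j)) ^ 2 ≤ 4 * M ^ 2 * U := by
      have : (H j i + H i j) ^ 2 ≤ 4 * M ^ 2 := by
        have : |H j i + H i j| ≤ 2 * M := (abs_add_le _ _).trans (by linarith [hH i j, hH j i])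
        rw [← sq_abs]
        nlinarith [abs_nonneg (H j i + H i j)]
      rw [mul_pow, mul_comm]
      exact mul_le_mul this (hV 2) (sq_nonneg _) (by positivity)
    rw [hid]
    set X := ∑ x : Fin 3 × Fin 3, (P x.1 i * P x.2 j) * T x.1 x.2
    nlinarith [sq_nonneg (2 * X - V 2 * (H j i + H i j))]
  have hb2 : ∀ i, ((if i = 2 then 0 else V i) + p i * V 2) ^ 2 ≤ 2 * U + 2 * M ^ 2 * U := by
    intro i
    have h1 : (if i = 2 then 0 else V i) ^ 2 ≤ U := by
      split_ifs
      · simpa using hU0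
      · exact hV i
    have h2 : (p i * V 2) ^ 2 ≤ M ^ 2 * U := by
      rw [mul_pow]
      exact mul_le_mul (hp2 i) (hV 2) (sq_nonneg _) (by positivity)
    nlinarith [sq_nonneg ((if i = 2 then 0 else V i) - p i * V 2)]
  have s1 := Finset.sum_le_sum fun i (_ : i ∈ (Finset.univ : Finset (Fin 3))) =>
    Finset.sum_le_sum fun j (_ : j ∈ (Finset.univ : Finset (Fin 3))) => hb1 i j
  have s2 := Finset.sum_le_sum fun i (_ : i ∈ (Finset.univ : Finset (Fin 3))) => hb2 i
  refine (add_le_add s1 s2).trans ?_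
  simp only [Finset.sum_const, Finset.card_univ, Fintype.card_fin, nsmul_eq_mul]
  push_cast
  have hSq : SS * c ≤ SS * p 2 := mul_le_mul_of_nonneg_left hq hSS0
  have hA : 648 * (M + 1) ^ 4 * SS ≤ 648 * (M + 1) ^ 4 / c * (SS * p 2) := by
    calc _ = 648 * (M + 1) ^ 4 / c * (SS * c) := by field_simp
      _ ≤ _ := by gcongr
  have hZ : 0 ≤ SS * p 2 := mul_nonneg hSS0 (by linarith)
  have k1 : 0 ≤ 648 * (M + 1) ^ 4 / c := by positivity
  have n1 := mul_nonneg k1 hU0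
  have n2 := mul_nonneg (sq_nonneg M) hZ
  nlinarith

theorem alg_two {c M : ℝ} (hc : 0 < c) (p V : Fin 3 → ℝ) (H g : Fin 3 → Fin 3 → ℝ)
    (hq : c ≤ p 2) (hp : ∀ i, |p i| ≤ M) (hH : ∀ i j, |H i j| ≤ M) (dw : Fin 3 → Fin 3 → ℝ)
    (hdw : ∀ i j, dw i j = (if i = 2 then 0 else g i j) + (p i * g 2 j + V 2 * H j i)) :
    ∑ i, ∑ j, (g i j) ^ 2 ≤
      (9 * ((1 + 3 * M ^ 2) * ((2 + 2 * M ^ 2) / c ^ 2) + 3 + 3 * M ^ 2)) *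
        (∑ i, ∑ j, dw i j ^ 2 + ∑ i, V i ^ 2) := by
  set U := ∑ i, V i ^ 2 with hU
  set D := ∑ i, ∑ j, dw i j ^ 2 with hD
  have hV : ∀ i, V i ^ 2 ≤ U := fun i =>
    Finset.single_le_sum (f := fun i => V i ^ 2) (fun i _ => sq_nonneg _) (Finset.mem_univ i)
  have hU0 : 0 ≤ U := by positivity
  have hD0 : 0 ≤ D := by positivity
  have hdD : ∀ i j, dw i j ^ 2 ≤ D := fun i j =>
    (Finset.single_le_sum (f := fun j => dw i j ^ 2) (fun i _ => sq_nonneg _)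
      (Finset.mem_univ j)).trans
    (Finset.single_le_sum (f := fun i => ∑ j, dw i j ^ 2) (fun i _ => by positivity)
      (Finset.mem_univ i))
  have hp2 : ∀ i, p i ^ 2 ≤ M ^ 2 := fun i => by
    rw [← sq_abs]; exact pow_le_pow_left₀ (abs_nonneg _) (hp i) 2
  have hH2 : ∀ i j, (V 2 * H i j) ^ 2 ≤ M ^ 2 * U := fun i j => by
    rw [mul_pow, mul_comm]
    refine mul_le_mul ?_ (hV 2) (sq_nonneg _) (by positivity)
    rw [← sq_abs]; exact pow_le_pow_left₀ (abs_nonneg _) (hH i j) 2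
  set k := (2 + 2 * M ^ 2) / c ^ 2 with hk
  have hk0 : 0 ≤ k := by positivity
  have h2 : ∀ j, g 2 j ^ 2 ≤ k * (D + U) := by
    intro j
    have e : p 2 * g 2 j = dw 2 j - V 2 * H j 2 := by rw [hdw]; simp
    have e1 : (p 2 * g 2 j) ^ 2 ≤ (2 + 2 * M ^ 2) * (D + U) := by
      rw [e]
      nlinarith [sq_nonneg (dw 2 j + V 2 * H j 2), hdD 2 j, hH2 j 2,
        mul_nonneg (sq_nonneg M) hD0]
    have e2 : c ^ 2 * g 2 j ^ 2 ≤ (p 2 * g 2 j) ^ 2 := by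
      rw [mul_pow]; gcongr
    rw [hk, div_mul_eq_mul_div, le_div_iff₀ (by positivity)]
    linarith
  have hall : ∀ i j, g i j ^ 2 ≤ ((1 + 3 * M ^ 2) * k + 3 + 3 * M ^ 2) * (D + U) := by
    intro i j
    have hDU : 0 ≤ D + U := by positivity
    have m0 := mul_nonneg (sq_nonneg M) hD0
    have m1 := mul_nonneg (mul_nonneg (sq_nonneg M) hk0) hDU
    have m2 := mul_nonneg hk0 hDU
    have m3 := mul_nonneg (sq_nonneg M) hU0
    by_cases hi : i = 2
    · subst hi
      nlinarith [h2 j]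
    · have e : g i j = dw i j - p i * g 2 j - V 2 * H j i := by rw [hdw, if_neg hi]; ring
      have e3 : (p i * g 2 j) ^ 2 ≤ M ^ 2 * (k * (D + U)) := by
        rw [mul_pow]
        exact mul_le_mul (hp2 i) (h2 j) (sq_nonneg _) (by positivity)
      have e4 : g i j ^ 2 ≤ 3 * (dw i j ^ 2 + (p i * g 2 j) ^ 2 + (V 2 * H j i) ^ 2) := by
        rw [e]
        nlinarith [sq_nonneg (dw i j + p i * g 2 j), sq_nonneg (dw i j + V 2 * H j i),
          sq_nonneg (p i * g 2 j - V 2 * H j i)]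
      nlinarith [hdD i j, hH2 j i]
  have s1 := Finset.sum_le_sum fun i (_ : i ∈ (Finset.univ : Finset (Fin 3))) =>
    Finset.sum_le_sum fun j (_ : j ∈ (Finset.univ : Finset (Fin 3))) => hall i j
  refine s1.trans (le_of_eq ?_)
  simp only [Finset.sum_const, Finset.card_univ, Fintype.card_fin, nsmul_eq_mul]
  push_cast
  ring

theorem pd_meas (i : Fin 3) (f : (Fin 3 → ℝ) → ℝ) : Measurable (pd i f) :=
  measurable_fderiv_apply_const ℝ f _

theorem pdphi_meas (φ : (Fin 3 → ℝ) → ℝ) (i : Fin 3) (f : (Fin 3 → ℝ) → ℝ) :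
    Measurable (pdphi φ i f) := by
  unfold pdphi
  by_cases h : i = 2
  · simp only [h, if_true]
    exact (pd_meas _ _).div (pd_meas _ _)
  · simp only [h, if_false]
    exact (pd_meas _ _).sub (((pd_meas _ _).div (pd_meas _ _)).mul (pd_meas _ _))

theorem gr_meas (W : Fin 3 → (Fin 3 → ℝ) → ℝ) : Measurable (gr W) := by
  have := fun i j => pd_meas j (W i)
  unfold gr
  fun_prop

/-- Proposition 2.4 of the paper (Korn inequality adapted to the fluid domain):
if `∂_zφ ≥ c₀` and `|∇φ| + |∇²φ| ≤ 1/c₀` then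
`∫_S |∇v|² ≤ C(c₀) (∫_S |S^φ v|² ∂_zφ + ∫_S |v|²)`. -/
theorem korn_adapted (c₀ : ℝ) (hc₀ : 0 < c₀) :
    ∃ C : ℝ, 0 < C ∧
      ∀ (φ : (Fin 3 → ℝ) → ℝ) (v : (Fin 3 → ℝ) → Fin 3 → ℝ),
        ContDiffOn ℝ 2 φ lowerHalf →
        (∀ x ∈ lowerHalf, c₀ ≤ pd 2 φ x) →
        (∀ x ∈ lowerHalf,
          Real.sqrt (∑ i : Fin 3, (pd i φ x) ^ 2)
            + Real.sqrt (∑ i : Fin 3, ∑ j : Fin 3, (pd i (pd j φ) x) ^ 2) ≤ 1 / c₀) →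
        ContDiffOn ℝ 1 v lowerHalf →
        IntegrableOn (fun x => ∑ i : Fin 3, (v x i) ^ 2) lowerHalf volume →
        IntegrableOn (fun x => ∑ i : Fin 3, ∑ j : Fin 3, (pd j (fun y => v y i) x) ^ 2)
          lowerHalf volume →
        ∫⁻ x in lowerHalf,
            ENNReal.ofReal (∑ i : Fin 3, ∑ j : Fin 3, (pd j (fun y => v y i) x) ^ 2)
          ≤ ENNReal.ofReal C *
            ((∫⁻ x in lowerHalf,
                ENNReal.ofReal
                  ((∑ i : Fin 3, ∑ j : Fin 3,
                      ((pdphi φ j (fun y => v y i) x + pdphi φ i (fun y => v y j) x) / 2) ^ 2)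
                    * pd 2 φ x))
              + ∫⁻ x in lowerHalf, ENNReal.ofReal (∑ i : Fin 3, (v x i) ^ 2)) := by
  obtain ⟨C, hC, hK⟩ := korn_open
  set M : ℝ := 1 / c₀ with hM
  have hM0 : 0 ≤ M := by positivity
  set K1 : ℝ := 648 * (M + 1) ^ 4 / c₀ + 72 * M ^ 2 + 6 + 6 * M ^ 2 with hK1
  set K2 : ℝ := 9 * ((1 + 3 * M ^ 2) * ((2 + 2 * M ^ 2) / c₀ ^ 2) + 3 + 3 * M ^ 2) with hK2
  have hK1p : 0 < K1 := by positivity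
  have hK2p : 0 < K2 := by positivity
  refine ⟨K2 * (C * K1 + 1), by positivity, fun φ v hφ hc hbd hv _ _ => ?_⟩
  have hopen : IsOpen lowerHalf := isOpen_z 0
  have hpc : ∀ i, ContDiffOn ℝ 1 (pd i φ) lowerHalf := fun i =>
    (hφ.fderiv_of_isOpen hopen (m := 1) (by norm_num)).clm_apply contDiffOn_const
  have hvc : ∀ i, ContDiffOn ℝ 1 (fun y => v y i) lowerHalf := fun i =>
    (contDiffOn_pi.mp hv) i
  set w : Fin 3 → (Fin 3 → ℝ) → ℝ := fun i x =>
    (if i = 2 then 0 else v x i) + pd i φ x * v x 2 with hw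
  have hwc : ∀ i, ContDiffOn ℝ 1 (w i) lowerHalf := by
    intro i
    refine ContDiffOn.add ?_ ((hpc i).mul (hvc 2))
    by_cases h : i = 2
    · simp only [h, if_true]; exact contDiffOn_const
    · simp only [h, if_false]; exact hvc i
  have hd : ∀ {f : (Fin 3 → ℝ) → ℝ}, ContDiffOn ℝ 1 f lowerHalf → ∀ x ∈ lowerHalf,
      HasFDerivAt f (fderiv ℝ f x) x := fun hf x hx =>
    ((hf.differentiableOn (by norm_num)).differentiableAt (hopen.mem_nhds hx)).hasFDerivAt
  have hdw : ∀ x ∈ lowerHalf, ∀ i j, pd j (w i) x = (if i = 2 then 0 else pd j (fun y => v y i) x)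
      + (pd i φ x * pd j (fun y => v y 2) x + v x 2 * pd j (pd i φ) x) := by
    intro x hx i j
    have h1 : HasFDerivAt (fun x => if i = 2 then (0 : ℝ) else v x i)
        (if i = 2 then 0 else fderiv ℝ (fun y => v y i) x) x := by
      by_cases h : i = 2
      · simp only [h, if_true]; exact hasFDerivAt_const _ _
      · simp only [h, if_false]; exact hd (hvc i) x hx
    have h2 := h1.add ((hd (hpc i) x hx).mul (hd (hvc 2) x hx))
    have h3 : pd j (w i) x = _ := pd_eq h2 j
    rw [h3]
    by_cases h : i = 2
    · subst h; simp [pd]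
    · simp [pd, h]
  have hp : ∀ x ∈ lowerHalf, ∀ i, |pd i φ x| ≤ M := by
    intro x hx i
    refine le_trans ?_ ((le_add_of_nonneg_right (Real.sqrt_nonneg _)).trans (hbd x hx))
    refine Real.abs_le_sqrt ?_
    exact Finset.single_le_sum (f := fun i => (pd i φ x) ^ 2) (fun i _ => sq_nonneg _)
      (Finset.mem_univ i)
  have hH : ∀ x ∈ lowerHalf, ∀ i j, |pd i (pd j φ) x| ≤ M := by
    intro x hx i j
    refine le_trans ?_ ((le_add_of_nonneg_left (Real.sqrt_nonneg _)).trans (hbd x hx))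
    refine Real.abs_le_sqrt ?_
    exact (Finset.single_le_sum (f := fun j => (pd i (pd j φ) x) ^ 2) (fun i _ => sq_nonneg _)
      (Finset.mem_univ j)).trans
      (Finset.single_le_sum (f := fun i => ∑ j, (pd i (pd j φ) x) ^ 2)
        (fun i _ => by positivity) (Finset.mem_univ i))
  set Q : (Fin 3 → ℝ) → ℝ := fun x => (∑ i : Fin 3, ∑ j : Fin 3,
    ((pdphi φ j (fun y => v y i) x + pdphi φ i (fun y => v y j) x) / 2) ^ 2) * pd 2 φ x with hQ
  set U : (Fin 3 → ℝ) → ℝ := fun x => ∑ i : Fin 3, (v x i) ^ 2 with hU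
  have hQm : Measurable Q := by
    have h1 := fun i j => pdphi_meas φ j (fun y => v y i)
    have h2 := pd_meas 2 φ
    simp only [hQ]
    fun_prop
  have hU0 : ∀ x, 0 ≤ U x := fun x => by simp only [hU]; positivity
  have hQ0 : ∀ x ∈ lowerHalf, 0 ≤ Q x := fun x hx =>
    mul_nonneg (by positivity) (hc₀.le.trans (hc x hx))
  have b1 : ∀ x ∈ lowerHalf, en w x ≤ K1 * (Q x + U x) := by
    intro x hx
    exact alg_one hc₀ hM0 (fun i => pd i φ x) (v x) (fun i j => pd i (pd j φ) x)
      (fun i j => pd j (fun y => v y i) x) (hc x hx) (hp x hx) (hH x hx)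
      (fun i j => pdphi φ j (fun y => v y i) x) (fun i j => pd j (w i) x)
      (fun i j => rfl) (hdw x hx)
  have b2 : ∀ x ∈ lowerHalf, gr (fun i y => v y i) x ≤ K2 * (gr w x + U x) := by
    intro x hx
    exact alg_two hc₀ (fun i => pd i φ x) (v x) (fun i j => pd i (pd j φ) x)
      (fun i j => pd j (fun y => v y i) x) (hc x hx) (hp x hx) (hH x hx)
      (fun i j => pd j (w i) x) (hdw x hx)
  have hms := hopen.measurableSet
  have I1 : ∫⁻ x in lowerHalf, ENNReal.ofReal (en w x) ≤ ENNReal.ofReal K1 *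
      ((∫⁻ x in lowerHalf, ENNReal.ofReal (Q x)) + ∫⁻ x in lowerHalf, ENNReal.ofReal (U x)) := by
    rw [← lintegral_add_left hQm.ennreal_ofReal, ← lintegral_const_mul' _ _ ENNReal.ofReal_ne_top]
    refine setLIntegral_mono' hms fun x hx => ?_
    rw [← ENNReal.ofReal_add (hQ0 x hx) (hU0 x), ← ENNReal.ofReal_mul hK1p.le]
    exact ENNReal.ofReal_le_ofReal (b1 x hx)
  have I2 : ∫⁻ x in lowerHalf, ENNReal.ofReal (gr (fun i y => v y i) x) ≤ ENNReal.ofReal K2 *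
      ((∫⁻ x in lowerHalf, ENNReal.ofReal (gr w x))
        + ∫⁻ x in lowerHalf, ENNReal.ofReal (U x)) := by
    rw [← lintegral_add_left (gr_meas w).ennreal_ofReal,
      ← lintegral_const_mul' _ _ ENNReal.ofReal_ne_top]
    refine setLIntegral_mono' hms fun x hx => ?_
    rw [← ENNReal.ofReal_add (by unfold gr; positivity) (hU0 x), ← ENNReal.ofReal_mul hK2p.le]
    exact ENNReal.ofReal_le_ofReal (b2 x hx)
  refine I2.trans ?_
  set A := ∫⁻ x in lowerHalf, ENNReal.ofReal (Q x)
  set B := ∫⁻ x in lowerHalf, ENNReal.ofReal (U x)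
  calc _ ≤ ENNReal.ofReal K2 * (ENNReal.ofReal C * (ENNReal.ofReal K1 * (A + B)) + 1 * (A + B)) := by
        gcongr
        · exact (hK w hwc).trans (by gcongr)
        · rw [one_mul]; exact le_add_self
    _ = ENNReal.ofReal (K2 * (C * K1 + 1)) * (A + B) := by
        rw [ENNReal.ofReal_mul hK2p.le, ENNReal.ofReal_add (by positivity) zero_le_one,
          ENNReal.ofReal_mul hC.le, ENNReal.ofReal_one]
        ring
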